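/- Let C be a simple tropical curve of genus g with n ≥ 2 leaves (a finite connected metric graph with all vertices of valence 3, with n unbounded leaf edges, and first Betti number g). Then the real vector space Ω(C) of 1-forms on C decomposes as a direct sum Ω(C) = Ω₀(C) ⊕ Ω_H(C) of the subspace of exact 1-forms (those whose integral over every loop vanishes) and the subspace of holomorphic 1-forms (those with all residues zero), with dim Ω₀(C) = n − 1 and dim Ω_H(C) = g. -/

import Mathlib

open Finset

section GraphSetup

variable {V D : Type} [Fintype V] [Fintype D] [DecidableEq V] [DecidableEq D]

/-- A loop in a graph given by darts: a nonempty cyclic chain of darts, injective on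
(unoriented) edges.  `rev` is orientation reversal and `tail` the initial vertex of
a dart; the head of `d` is `tail (rev d)`. -/
def IsLoop (rev : D → D) (tail : D → V) (c : List D) : Prop :=
  c ≠ [] ∧ c.Nodup ∧ (∀ d ∈ c, rev d ∉ c) ∧
    c.Chain' (fun d d' => tail (rev d) = tail d') ∧
    ∀ a ∈ c.head?, ∀ b ∈ c.getLast?, tail (rev b) = tail a

/-- The integral of a 1-form `ω` along a loop `c`: `Σ l(e)·ω(e⃗)`. -/
def loopIntegral (len : D → ℝ) (ω : D → ℝ) (c : List D) : ℝ :=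
  (c.map fun d => len d * ω d).sum

/-- A 1-form on the graph: antisymmetric under orientation reversal and satisfying
the Kirchhoff balancing condition at every internal (non-leaf) vertex. -/
def IsBalanced (rev : D → D) (tail : D → V) (isLeaf : V → Prop) [DecidablePred isLeaf]
    (ω : D → ℝ) : Prop :=
  (∀ d, ω (rev d) = - ω d) ∧
    ∀ v, ¬ isLeaf v → ∑ d ∈ univ.filter (fun d => tail d = v), ω d = 0

/-- A 1-form is exact if its integral over every loop vanishes. -/
def IsExact (rev : D → D) (tail : D → V) (len : D → ℝ) (ω : D → ℝ) : Prop :=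
  ∀ c : List D, IsLoop rev tail c → loopIntegral len ω c = 0

/-- A 1-form is holomorphic if its residues (its values on leaf edges) all vanish. -/
def IsHolomorphic (tail : D → V) (isLeaf : V → Prop) (ω : D → ℝ) : Prop :=
  ∀ d, isLeaf (tail d) → ω d = 0

/-- Connectivity of the graph: any two vertices are joined by a chain of darts. -/
def GraphConnected (rev : D → D) (tail : D → V) : Prop :=
  ∀ v w : V, Relation.ReflTransGen (fun x y => ∃ d, tail d = x ∧ tail (rev d) = y) v w

end GraphSetup
section Submodules
set_option linter.unusedSectionVars false

variable {V D : Type} [Fintype V] [Fintype D] [DecidableEq V] [DecidableEq D]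

theorem loopIntegral_add (len a b : D → ℝ) (c : List D) :
    loopIntegral len (a + b) c = loopIntegral len a c + loopIntegral len b c := by
  induction c with
  | nil => simp [loopIntegral]
  | cons d t ih =>
    simp only [loopIntegral, List.map_cons, List.sum_cons] at ih ⊢
    rw [ih, Pi.add_apply]; ring

theorem loopIntegral_smul (len : D → ℝ) (r : ℝ) (a : D → ℝ) (c : List D) :
    loopIntegral len (r • a) c = r * loopIntegral len a c := by
  induction c with
  | nil => simp [loopIntegral]
  | cons d t ih =>
    simp only [loopIntegral, List.map_cons, List.sum_cons] at ih ⊢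
    rw [ih, Pi.smul_apply, smul_eq_mul]; ring

/-- The space `Ω(C)` of 1-forms (balanced, antisymmetric). -/
def OmegaSub (rev : D → D) (tail : D → V) (isLeaf : V → Prop) [DecidablePred isLeaf] :
    Submodule ℝ (D → ℝ) where
  carrier := {ω | IsBalanced rev tail isLeaf ω}
  zero_mem' := ⟨fun d => by simp, fun v hv => by simp⟩
  add_mem' := by
    rintro a b ⟨ha1, ha2⟩ ⟨hb1, hb2⟩
    refine ⟨fun d => ?_, fun v hv => ?_⟩
    · simp only [Pi.add_apply, ha1 d, hb1 d]; ring
    · simp only [Pi.add_apply, Finset.sum_add_distrib, ha2 v hv, hb2 v hv, add_zero]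
  smul_mem' := by
    rintro r a ⟨ha1, ha2⟩
    refine ⟨fun d => ?_, fun v hv => ?_⟩
    · simp only [Pi.smul_apply, smul_eq_mul, ha1 d]; ring
    · simp only [Pi.smul_apply, smul_eq_mul, ← Finset.mul_sum, ha2 v hv, mul_zero]

/-- The space `Ω₀(C)` of exact 1-forms. -/
def Omega0Sub (rev : D → D) (tail : D → V) (isLeaf : V → Prop) [DecidablePred isLeaf]
    (len : D → ℝ) : Submodule ℝ (D → ℝ) where
  carrier := {ω | IsBalanced rev tail isLeaf ω ∧ IsExact rev tail len ω}
  zero_mem' := ⟨(OmegaSub rev tail isLeaf).zero_mem, fun c _ => by simp [loopIntegral]⟩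
  add_mem' := by
    rintro a b ⟨ha, ha'⟩ ⟨hb, hb'⟩
    exact ⟨(OmegaSub rev tail isLeaf).add_mem ha hb,
      fun c hc => by rw [loopIntegral_add, ha' c hc, hb' c hc, add_zero]⟩
  smul_mem' := by
    rintro r a ⟨ha, ha'⟩
    exact ⟨(OmegaSub rev tail isLeaf).smul_mem r ha,
      fun c hc => by rw [loopIntegral_smul, ha' c hc, mul_zero]⟩

/-- The space `Ω_H(C)` of holomorphic 1-forms (all residues zero). -/
def OmegaHSub (rev : D → D) (tail : D → V) (isLeaf : V → Prop) [DecidablePred isLeaf] :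
    Submodule ℝ (D → ℝ) where
  carrier := {ω | IsBalanced rev tail isLeaf ω ∧ IsHolomorphic tail isLeaf ω}
  zero_mem' := ⟨(OmegaSub rev tail isLeaf).zero_mem, fun d _ => rfl⟩
  add_mem' := by
    rintro a b ⟨ha, ha'⟩ ⟨hb, hb'⟩
    exact ⟨(OmegaSub rev tail isLeaf).add_mem ha hb,
      fun d hd => by simp [Pi.add_apply, ha' d hd, hb' d hd]⟩
  smul_mem' := by
    rintro r a ⟨ha, ha'⟩
    exact ⟨(OmegaSub rev tail isLeaf).smul_mem r ha,
      fun d hd => by simp [Pi.smul_apply, ha' d hd]⟩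

end Submodules

section Proof

variable {V D : Type} [Fintype V] [Fintype D] [DecidableEq V] [DecidableEq D]

/-- A self-map of a nonempty finite type gives a cyclic orbit list. -/
theorem exists_pos_loop (rev : D → D) (tail : D → V) (ω : D → ℝ)
    (hanti : ∀ d, ω (rev d) = - ω d)
    (hstep : ∀ d, 0 < ω d → ∃ d', 0 < ω d' ∧ tail (rev d) = tail d')
    (d₀ : D) (h₀ : 0 < ω d₀) :
    ∃ c : List D, IsLoop rev tail c ∧ ∀ d ∈ c, 0 < ω d := by
  classical
  choose! nx hpos hnx using hstep
  have hP : ∀ k d, 0 < ω d → 0 < ω (nx^[k] d) := by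
    intro k
    induction k with
    | zero => intro d hd; simpa using hd
    | succ k ih => intro d hd; rw [Function.iterate_succ_apply]; exact ih _ (hpos d hd)
  obtain ⟨y, hy, p, hp, hper⟩ : ∃ y, 0 < ω y ∧ ∃ p, 0 < p ∧ Function.IsPeriodicPt nx p y := by
    obtain ⟨i, j, hij, he⟩ :=
      Finite.exists_ne_map_eq_of_infinite (fun k : ℕ => nx^[k] d₀)
    wlog hlt : i < j generalizing i j
    · exact this j i hij.symm he.symm (by omega)
    refine ⟨nx^[i] d₀, hP _ _ h₀, j - i, by omega, ?_⟩
    change nx^[j - i] (nx^[i] d₀) = nx^[i] d₀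
    rw [← Function.iterate_add_apply, Nat.sub_add_cancel hlt.le]
    exact he.symm
  have hm := hper.minimalPeriod_pos hp
  set m := Function.minimalPeriod nx y with hmdef
  have hcl : nx^[m] y = y := Function.isPeriodicPt_minimalPeriod nx y
  have hall : ∀ d ∈ (List.range m).map (fun k => nx^[k] y), 0 < ω d := by
    intro d hd
    obtain ⟨k, -, rfl⟩ := List.mem_map.1 hd
    exact hP k y hy
  refine ⟨(List.range m).map (fun k => nx^[k] y), ⟨?_, ?_, ?_, ?_, ?_⟩, hall⟩
  · simp; omega
  · refine List.Nodup.map_on ?_ List.nodup_range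
    intro a ha b hb hab
    exact Function.iterate_injOn_Iio_minimalPeriod (by simpa using ha) (by simpa using hb) hab
  · intro d hd hr
    have h1 := hall _ hd
    have h2 := hall _ hr
    rw [hanti] at h2
    linarith
  · change List.IsChain _ _
    rw [List.isChain_map, List.isChain_range]
    intro k _
    change tail (rev (nx^[k] y)) = tail (nx^[k+1] y)
    rw [Function.iterate_succ_apply']
    exact hnx _ (hP k y hy)
  · intro a ha b hb
    obtain ⟨q, hq⟩ : ∃ q, m = q + 1 := ⟨m - 1, by omega⟩
    rw [hq] at ha hb hcl
    have ha' : y = a := by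
      simpa [List.range_succ_eq_map] using ha
    have hb' : nx^[q] y = b := by
      simpa [List.range_succ] using hb
    subst hb'
    rw [hnx _ (hP q y hy), ← Function.iterate_succ_apply' nx, hcl, ha']

/-- Divergence of a function on darts. -/
def divMap (tail : D → V) : (D → ℝ) →ₗ[ℝ] (V → ℝ) where
  toFun ω v := ∑ d ∈ univ.filter (fun d => tail d = v), ω d
  map_add' a b := by ext v; simp [Finset.sum_add_distrib]
  map_smul' r a := by ext v; simp [Finset.mul_sum]

/-- The gradient of a function on vertices. -/
noncomputable def gradMap (rev : D → D) (tail : D → V) (len : D → ℝ) :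
    (V → ℝ) →ₗ[ℝ] (D → ℝ) where
  toFun f d := (f (tail (rev d)) - f (tail d)) / len d
  map_add' a b := by ext v; simp; ring
  map_smul' r a := by ext v; simp; ring

/-- Antisymmetric functions on darts. -/
def antiSub (rev : D → D) : Submodule ℝ (D → ℝ) where
  carrier := {ω | ∀ d, ω (rev d) = - ω d}
  zero_mem' := fun d => by simp
  add_mem' := by
    intro a b ha hb d
    simp only [Pi.add_apply, ha d, hb d]; ring
  smul_mem' := by
    intro r a ha d
    simp only [Pi.smul_apply, smul_eq_mul, ha d]; ring

/-- The sum functional. -/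
def sumMap (ι : Type) [Fintype ι] : (ι → ℝ) →ₗ[ℝ] ℝ where
  toFun f := ∑ i, f i
  map_add' a b := by simp [Finset.sum_add_distrib]
  map_smul' r a := by simp [Finset.mul_sum]

theorem finrank_sumMap_ker (ι : Type) [Fintype ι] [Nonempty ι] :
    Module.finrank ℝ (LinearMap.ker (sumMap ι)) + 1 = Fintype.card ι := by
  classical
  have hne : sumMap ι ≠ 0 := by
    intro h
    have := congrArg (fun F => F (fun _ => (1 : ℝ))) h
    simp [sumMap] at this
  have := Module.Dual.finrank_ker_add_one_of_ne_zero (f := sumMap ι) hne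
  simpa using this

theorem finrank_antiSub (rev : D → D) (hrev : ∀ d, rev (rev d) = d) (hrevne : ∀ d, rev d ≠ d) :
    2 * Module.finrank ℝ (antiSub rev) = Fintype.card D := by
  let R : (D → ℝ) →ₗ[ℝ] (D → ℝ) := LinearMap.funLeft ℝ ℝ rev
  have hR : ∀ ω d, R ω d = ω (rev d) := fun ω d => rfl
  let P : (D → ℝ) →ₗ[ℝ] (D → ℝ) := (1/2 : ℝ) • (LinearMap.id - R)
  have hP : LinearMap.IsProj (antiSub rev) P := by
    refine ⟨fun ω d => ?_, fun ω hω => ?_⟩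
    · simp [P, hR, hrev]
      ring
    · ext d
      have := hω d
      simp [P, hR, this]
      ring
  have htr := hP.trace
  have hRtr : LinearMap.trace ℝ (D → ℝ) R = 0 := by
    rw [LinearMap.trace_eq_matrix_trace ℝ (Pi.basisFun ℝ D)]
    unfold Matrix.trace
    apply Finset.sum_eq_zero
    intro d _
    simp [Matrix.diag, LinearMap.toMatrix_apply, hR, Pi.single_apply, hrevne]
  simp only [P, map_smul, map_sub, hRtr, LinearMap.trace_id] at htr
  simp at htr
  have : (Fintype.card D : ℝ) = 2 * Module.finrank ℝ (antiSub rev) := by linarith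
  exact_mod_cast this.symm

theorem sum_div (tail : D → V) (f : V → ℝ) (ω : D → ℝ) :
    ∑ v, f v * divMap tail ω v = ∑ d, f (tail d) * ω d := by
  simp only [divMap, LinearMap.coe_mk, AddHom.coe_mk, Finset.mul_sum]
  rw [← Finset.sum_fiberwise univ tail (fun d => f (tail d) * ω d)]
  refine Finset.sum_congr rfl fun v _ => Finset.sum_congr rfl fun d hd => ?_
  rw [(Finset.mem_filter.1 hd).2]

theorem sum_rev (rev : D → D) (hrev : ∀ d, rev (rev d) = d) (F : D → ℝ) :
    ∑ d, F (rev d) = ∑ d, F d :=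
  Equiv.sum_comp (Function.Involutive.toPerm rev hrev) F

theorem div_mem_sumKer (rev : D → D) (tail : D → V) (hrev : ∀ d, rev (rev d) = d)
    (ω : D → ℝ) (hω : ω ∈ antiSub rev) : divMap tail ω ∈ LinearMap.ker (sumMap V) := by
  rw [LinearMap.mem_ker]
  have h1 := sum_div tail (fun _ => 1) ω
  have h2 := sum_rev rev hrev ω
  have h3 : ∑ d, ω (rev d) = - ∑ d, ω d := by
    rw [← Finset.sum_neg_distrib]; exact Finset.sum_congr rfl fun d _ => hω d
  simp only [one_mul] at h1
  change ∑ v, divMap tail ω v = 0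
  linarith

theorem grad_anti (rev : D → D) (tail : D → V) (len : D → ℝ) (hrev : ∀ d, rev (rev d) = d)
    (hlensym : ∀ d, len (rev d) = len d) (f : V → ℝ) :
    gradMap rev tail len f ∈ antiSub rev := by
  intro d
  simp only [gradMap, LinearMap.coe_mk, AddHom.coe_mk, hrev, hlensym]
  ring

theorem laplace_ker (rev : D → D) (tail : D → V) (len : D → ℝ) (hrev : ∀ d, rev (rev d) = d)
    (hconn : GraphConnected rev tail)
    (hlen : ∀ d, 0 < len d) (hlensym : ∀ d, len (rev d) = len d) (f : V → ℝ)
    (hf : divMap tail (gradMap rev tail len f) = 0) (v w : V) : f v = f w := by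
  set ω := gradMap rev tail len f with hω
  have hanti : ω ∈ antiSub rev := grad_anti rev tail len hrev hlensym f
  have h1 := sum_div tail f ω
  rw [hf] at h1
  simp only [Pi.zero_apply, mul_zero, Finset.sum_const_zero] at h1
  have h2 := sum_rev rev hrev (fun d => f (tail d) * ω d)
  have h3 : ∑ d, (f (tail (rev d)) - f (tail d)) * ω d = 0 := by
    have : ∀ d, (f (tail (rev d)) - f (tail d)) * ω d
        = - (f (tail (rev d)) * ω (rev d)) - f (tail d) * ω d := by
      intro d; rw [hanti d]; ring
    simp only [this, Finset.sum_sub_distrib, Finset.sum_neg_distrib]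
    linarith
  have h4 : ∀ d, (f (tail (rev d)) - f (tail d)) * ω d
      = (f (tail (rev d)) - f (tail d)) ^ 2 / len d := by
    intro d
    simp only [hω, gradMap, LinearMap.coe_mk, AddHom.coe_mk]
    ring
  simp only [h4] at h3
  rw [Finset.sum_eq_zero_iff_of_nonneg
    (fun d _ => div_nonneg (sq_nonneg _) (hlen d).le)] at h3
  have h5 : ∀ d, f (tail (rev d)) = f (tail d) := by
    intro d
    have := h3 d (Finset.mem_univ d)
    have hl := (hlen d).ne'
    rw [div_eq_zero_iff] at this
    rcases this with h | h
    · have := pow_eq_zero_iff (two_ne_zero) |>.1 h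
      linarith
    · exact absurd h hl
  have h := hconn v w
  induction h with
  | refl => rfl
  | tail _ h ih =>
    obtain ⟨d, rfl, rfl⟩ := h
    rw [ih, h5]

theorem laplace_range (rev : D → D) (tail : D → V) (len : D → ℝ) (hrev : ∀ d, rev (rev d) = d)
    (hconn : GraphConnected rev tail) [Nonempty V]
    (hlen : ∀ d, 0 < len d) (hlensym : ∀ d, len (rev d) = len d) :
    LinearMap.range (divMap tail ∘ₗ gradMap rev tail len) = LinearMap.ker (sumMap V) := by
  apply Submodule.eq_of_le_of_finrank_le
  · rintro _ ⟨f, rfl⟩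
    exact div_mem_sumKer rev tail hrev _ (grad_anti rev tail len hrev hlensym f)
  · have h1 := LinearMap.finrank_range_add_finrank_ker (divMap tail ∘ₗ gradMap rev tail len)
    have h2 := finrank_sumMap_ker V
    have h3 : Module.finrank ℝ (LinearMap.ker (divMap tail ∘ₗ gradMap rev tail len)) ≤ 1 := by
      obtain ⟨v₀⟩ := ‹Nonempty V›
      have hle : LinearMap.ker (divMap tail ∘ₗ gradMap rev tail len)
          ≤ Submodule.span ℝ {(fun _ => 1 : V → ℝ)} := by
        intro f hf
        rw [Submodule.mem_span_singleton]
        refine ⟨f v₀, ?_⟩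
        ext v
        simp only [Pi.smul_apply, smul_eq_mul, mul_one]
        exact laplace_ker rev tail len hrev hconn hlen hlensym f hf v₀ v
      exact (Submodule.finrank_mono hle).trans
        ((finrank_span_le_card _).trans (by simp))
    rw [Module.finrank_pi] at h1
    omega

/-- Gradients are exact: telescoping along a chain. -/
theorem grad_chain (rev : D → D) (tail : D → V) (len : D → ℝ)
    (hlen : ∀ d, 0 < len d) (f : V → ℝ) (a : D) (c : List D)
    (hc : (a :: c).IsChain (fun d d' => tail (rev d) = tail d')) :
    loopIntegral len (gradMap rev tail len f) (a :: c)
      = f (tail (rev ((a :: c).getLast (by simp)))) - f (tail a) := by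
  have key : ∀ d, len d * gradMap rev tail len f d = f (tail (rev d)) - f (tail d) := by
    intro d
    have := (hlen d).ne'
    simp only [gradMap, LinearMap.coe_mk, AddHom.coe_mk]
    field_simp
  induction c generalizing a with
  | nil => simp [loopIntegral, key]
  | cons b t ih =>
    rw [List.isChain_cons_cons] at hc
    have := ih b hc.2
    simp only [loopIntegral, List.map_cons, List.sum_cons] at this ⊢
    rw [this, key, hc.1, List.getLast_cons (List.cons_ne_nil b t)]
    ring

theorem grad_exact (rev : D → D) (tail : D → V) (len : D → ℝ)
    (hlen : ∀ d, 0 < len d) (f : V → ℝ) :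
    IsExact rev tail len (gradMap rev tail len f) := by
  rintro c ⟨hne, -, -, hch, hcl⟩
  cases c with
  | nil => exact absurd rfl hne
  | cons a t =>
    rw [grad_chain rev tail len hlen f a t hch]
    rw [hcl a (by simp) _ (List.getLast_mem_getLast? (by simp))]
    ring

theorem holo_iff (rev : D → D) (tail : D → V) (isLeaf : V → Prop) [DecidablePred isLeaf]
    (hleaf : ∀ v, isLeaf v ↔ (univ.filter fun d => tail d = v).card = 1) (ω : D → ℝ) :
    ω ∈ OmegaHSub rev tail isLeaf ↔ ω ∈ antiSub rev ∧ divMap tail ω = 0 := by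
  constructor
  · rintro ⟨⟨h1, h2⟩, h3⟩
    refine ⟨h1, ?_⟩
    ext v
    by_cases hv : isLeaf v
    · refine Finset.sum_eq_zero fun d hd => h3 d ?_
      rw [(Finset.mem_filter.1 hd).2]; exact hv
    · exact h2 v hv
  · rintro ⟨h1, h2⟩
    refine ⟨⟨h1, fun v _ => congrFun h2 v⟩, fun d hd => ?_⟩
    obtain ⟨e, he⟩ := Finset.card_eq_one.1 ((hleaf _).1 hd)
    have hde : d ∈ univ.filter (fun d' => tail d' = tail d) := by simp
    rw [he, Finset.mem_singleton] at hde
    have h3 : ∑ d' ∈ univ.filter (fun d' => tail d' = tail d), ω d' = 0 := congrFun h2 (tail d)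
    rw [he, Finset.sum_singleton] at h3
    rw [hde, h3]

theorem exact_circ_zero (rev : D → D) (tail : D → V) (len : D → ℝ)
    (hlen : ∀ d, 0 < len d) (ω : D → ℝ) (hanti : ω ∈ antiSub rev)
    (hdiv : divMap tail ω = 0) (hex : IsExact rev tail len ω) : ω = 0 := by
  have hno : ∀ d, ¬ 0 < ω d := by
    intro d₀ h₀
    obtain ⟨c, hc, hpos⟩ := exists_pos_loop rev tail ω hanti (by
      intro d hd
      by_contra! hcon
      have h1 : ∑ d' ∈ univ.filter (fun d' => tail d' = tail (rev d)), ω d' = 0 :=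
        congrFun hdiv (tail (rev d))
      have h2 : ∑ d' ∈ univ.filter (fun d' => tail d' = tail (rev d)), ω d' < 0 := by
        apply Finset.sum_neg'
        · intro i hi
          by_contra! hi'
          exact hcon i hi' (Finset.mem_filter.1 hi).2.symm
        · exact ⟨rev d, by simp, by rw [hanti d]; linarith⟩
      linarith) d₀ h₀
    have h1 := hex c hc
    have h2 : 0 < loopIntegral len ω c := by
      apply List.sum_pos
      · intro x hx
        obtain ⟨d, hd, rfl⟩ := List.mem_map.1 hx
        exact mul_pos (hlen d) (hpos d hd)
      · simpa using hc.1
    linarith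
  ext d
  have h1 := hno d
  have h2 := hno (rev d)
  rw [hanti d] at h2
  simp only [Pi.zero_apply]
  linarith

end Proof

/-- On a simple tropical curve of genus `g` with `n ≥ 2` leaves, the space of 1-forms
decomposes as `Ω(C) = Ω₀(C) ⊕ Ω_H(C)`, with `dim Ω₀(C) = n − 1` and
`dim Ω_H(C) = g`.  (The genus enters via Euler's formula `#E = #V + g − 1`,
i.e. `#D + 2 = 2·#V + 2g` for darts.) -/
theorem stmt4 {V D : Type} [Fintype V] [Fintype D] [DecidableEq V] [DecidableEq D]
    (rev : D → D) (tail : D → V) (isLeaf : V → Prop) [DecidablePred isLeaf]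
    (len : D → ℝ) (n g : ℕ)
    (hrev : ∀ d, rev (rev d) = d) (hrevne : ∀ d, rev d ≠ d)
    (hconn : GraphConnected rev tail)
    (hleaf : ∀ v, isLeaf v ↔ (univ.filter fun d => tail d = v).card = 1)
    (htri : ∀ v, ¬ isLeaf v → (univ.filter fun d => tail d = v).card = 3)
    (hlen : ∀ d, 0 < len d) (hlensym : ∀ d, len (rev d) = len d)
    (hn : (univ.filter fun v => isLeaf v).card = n) (hn2 : 2 ≤ n)
    (hg : Fintype.card D + 2 = 2 * Fintype.card V + 2 * g) :
    Omega0Sub rev tail isLeaf len ⊔ OmegaHSub rev tail isLeaf = OmegaSub rev tail isLeaf ∧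
    Omega0Sub rev tail isLeaf len ⊓ OmegaHSub rev tail isLeaf = ⊥ ∧
    Module.finrank ℝ (Omega0Sub rev tail isLeaf len) = n - 1 ∧
    Module.finrank ℝ (OmegaHSub rev tail isLeaf) = g := by
  have hNV : Nonempty V := by
    have : 0 < (univ.filter fun v => isLeaf v).card := by omega
    obtain ⟨v, _⟩ := Finset.card_pos.1 this
    exact ⟨v⟩
  have hNL : Nonempty {v // isLeaf v} := by
    have : 0 < (univ.filter fun v => isLeaf v).card := by omega
    obtain ⟨v, hv⟩ := Finset.card_pos.1 this
    exact ⟨⟨v, (Finset.mem_filter.1 hv).2⟩⟩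
  have hrange := laplace_range rev tail len hrev hconn hlen hlensym
  -- every zero-sum function is the divergence of an exact antisymmetric form
  have hsolve : ∀ h : V → ℝ, ∑ v, h v = 0 → ∃ η, η ∈ antiSub rev ∧ IsExact rev tail len η ∧
      divMap tail η = h := by
    intro h hh
    have : h ∈ LinearMap.range (divMap tail ∘ₗ gradMap rev tail len) := by
      rw [hrange]; exact hh
    obtain ⟨f, hf⟩ := this
    exact ⟨gradMap rev tail len f, grad_anti rev tail len hrev hlensym f,
      grad_exact rev tail len hlen f, hf⟩
  have hinf : Omega0Sub rev tail isLeaf len ⊓ OmegaHSub rev tail isLeaf = ⊥ := by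
    rw [eq_bot_iff]
    rintro ω ⟨⟨_, hex⟩, hH⟩
    have := (holo_iff rev tail isLeaf hleaf ω).1 hH
    exact exact_circ_zero rev tail len hlen ω this.1 this.2 hex
  refine ⟨?_, hinf, ?_, ?_⟩
  · apply le_antisymm
    · exact sup_le (fun ω h => h.1) (fun ω h => h.1)
    · intro ω hω
      have hω1 : ω ∈ antiSub rev := hω.1
      obtain ⟨η, h1, h2, h3⟩ := hsolve (divMap tail ω) (div_mem_sumKer rev tail hrev ω hω1)
      refine Submodule.mem_sup.2 ⟨η, ⟨⟨h1, fun v hv => ?_⟩, h2⟩, ω - η, ?_, by abel⟩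
      · exact (congrFun h3 v).trans (hω.2 v hv)
      · rw [holo_iff rev tail isLeaf hleaf]
        exact ⟨Submodule.sub_mem _ hω1 h1, by rw [map_sub, h3, sub_self]⟩
  · let Φ : Omega0Sub rev tail isLeaf len →ₗ[ℝ] ({v // isLeaf v} → ℝ) :=
      (LinearMap.funLeft ℝ ℝ Subtype.val ∘ₗ divMap tail) ∘ₗ (Omega0Sub rev tail isLeaf len).subtype
    have hΦ : ∀ ω v, Φ ω v = divMap tail ω.1 v.1 := fun _ _ => rfl
    have hker : LinearMap.ker Φ = ⊥ := by
      rw [LinearMap.ker_eq_bot']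
      rintro ⟨ω, ⟨hb, hex⟩⟩ h0
      have : divMap tail ω = 0 := by
        ext v
        by_cases hv : isLeaf v
        · exact congrFun h0 ⟨v, hv⟩
        · exact hb.2 v hv
      exact Subtype.ext (exact_circ_zero rev tail len hlen ω hb.1 this hex)
    have hran : LinearMap.range Φ = LinearMap.ker (sumMap {v // isLeaf v}) := by
      have hsub : ∀ h : V → ℝ, (∀ v, ¬ isLeaf v → h v = 0) →
          ∑ v : {v // isLeaf v}, h v = ∑ v, h v := by
        intro h hh
        rw [← Finset.sum_filter_add_sum_filter_not univ isLeaf h,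
          Finset.sum_eq_zero (s := univ.filter fun v => ¬ isLeaf v)
            (fun v hv => hh v (Finset.mem_filter.1 hv).2), add_zero]
        exact (Finset.sum_subtype _ (by simp) h).symm
      ext k
      constructor
      · rintro ⟨ω, rfl⟩
        have h1 := hsub (divMap tail ω.1) (fun v hv => ω.2.1.2 v hv)
        have h2 : ∑ v, divMap tail ω.1 v = 0 := div_mem_sumKer rev tail hrev ω.1 ω.2.1.1
        exact h1.trans h2
      · intro hk
        have hk' : ∑ v, k v = 0 := hk
        let h : V → ℝ := fun v => if hv : isLeaf v then k ⟨v, hv⟩ else 0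
        have hh : ∀ v, ¬ isLeaf v → h v = 0 := fun v hv => by simp [h, hv]
        have hhk : ∀ v : {v // isLeaf v}, h v = k v := fun v => by simp [h, v.2]
        have h1 := hsub h hh
        simp only [hhk, hk'] at h1
        obtain ⟨η, e1, e2, e3⟩ := hsolve h h1.symm
        refine ⟨⟨η, ⟨e1, fun v hv => (congrFun e3 v).trans (hh v hv)⟩, e2⟩, ?_⟩
        ext v
        rw [hΦ, e3, hhk]
    have h1 := LinearMap.finrank_range_add_finrank_ker Φ
    rw [hker, hran, finrank_bot] at h1
    have h2 := finrank_sumMap_ker {v // isLeaf v}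
    rw [Fintype.card_subtype, hn] at h2
    omega
  · let Ψ : antiSub rev →ₗ[ℝ] (V → ℝ) := divMap tail ∘ₗ (antiSub rev).subtype
    have hran : LinearMap.range Ψ = LinearMap.ker (sumMap V) := by
      ext k
      constructor
      · rintro ⟨ω, rfl⟩
        exact div_mem_sumKer rev tail hrev ω.1 ω.2
      · intro hk
        obtain ⟨η, e1, _, e3⟩ := hsolve k hk
        exact ⟨⟨η, e1⟩, e3⟩
    have hker : OmegaHSub rev tail isLeaf = (LinearMap.ker Ψ).map (antiSub rev).subtype := by
      ext ω
      rw [holo_iff rev tail isLeaf hleaf, Submodule.mem_map]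
      constructor
      · rintro ⟨h1, h2⟩
        exact ⟨⟨ω, h1⟩, h2, rfl⟩
      · rintro ⟨⟨η, h1⟩, h2, rfl⟩
        exact ⟨h1, h2⟩
    rw [hker, Submodule.finrank_map_subtype_eq]
    have h1 := LinearMap.finrank_range_add_finrank_ker Ψ
    rw [hran] at h1
    have h2 := finrank_sumMap_ker V
    have h3 := finrank_antiSub rev hrev hrevne
    omega
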